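/- Let Y ~ N(0,1). For 1/n ≤ τ₁ < τ₂ ≤ 1/2, the horseshoe posterior variances satisfy E_0 ( var(θ | Y, τ₁) − var(θ | Y, τ₂) )² ≲ (τ₂ − τ₁)² τ₁^{-1} ζ_{τ₁}², with a universal multiplicative constant. -/

import Mathlib

open MeasureTheory ProbabilityTheory Filter Set Real Asymptotics
open scoped ENNReal NNReal BigOperators

noncomputable section

/-- Standard normal density `φ`. -/
def phiN (x : ℝ) : ℝ := (Real.sqrt (2 * Real.pi))⁻¹ * Real.exp (-(x ^ 2) / 2)

/-- Horseshoe prior density with global parameter `τ`. -/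
def gHS (τ θ : ℝ) : ℝ :=
  ∫ l in Set.Ioi (0 : ℝ), phiN (θ / (l * τ)) / (l * τ) * (2 / (Real.pi * (1 + l ^ 2)))

/-- Unnormalised marginal posterior density of `θᵢ` given `Yᵢ = y` (parameter `τ`). -/
def postDens (τ y θ : ℝ) : ℝ := phiN (y - θ) * gHS τ θ

/-- Bayesian marginal density `ψ_τ(y)` of one observation. -/
def margDens (τ y : ℝ) : ℝ := ∫ θ, postDens τ y θ

/-- Marginal posterior probability `Π(θᵢ ∈ A | Yᵢ = y, τ)`. -/
def postProb (τ y : ℝ) (A : Set ℝ) : ℝ := (∫ θ in A, postDens τ y θ) / margDens τ y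

/-- Marginal posterior mean `θ̂ᵢ(τ)`. -/
def postMean (τ y : ℝ) : ℝ := (∫ θ, θ * postDens τ y θ) / margDens τ y

/-- Marginal posterior variance. -/
def postVar (τ y : ℝ) : ℝ :=
  (∫ θ, (θ - postMean τ y) ^ 2 * postDens τ y θ) / margDens τ y

/-- Marginal posterior fourth central moment. -/
def postMom4 (τ y : ℝ) : ℝ :=
  (∫ θ, (θ - postMean τ y) ^ 4 * postDens τ y θ) / margDens τ y

/-- `ζ_τ = √(2 log (1/τ))`. -/
def zet (τ : ℝ) : ℝ := Real.sqrt (2 * Real.log (1 / τ))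

/-- `τ_n(p) = (p/n) √(log (n/p))`. -/
def tauOpt (n p : ℕ) : ℝ := ((p : ℝ) / (n : ℝ)) * Real.sqrt (Real.log ((n : ℝ) / (p : ℝ)))

/-- The law `P_{θ₀}` of `Y^n`. -/
def Pdata {n : ℕ} (θ₀ : Fin n → ℝ) : Measure (Fin n → ℝ) :=
  Measure.pi fun i => gaussianReal (θ₀ i) 1

/-- The standard normal upper `α`-quantile `z_α`. -/
def zquant (α : ℝ) : ℝ := sInf {z : ℝ | ((gaussianReal 0 1) (Set.Ioi z)).toReal ≤ α}

/-- Nearly black vectors `ℓ₀[p]`. -/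
def nearlyBlack (n p : ℕ) : Set (Fin n → ℝ) :=
  {θ | ({i | θ i ≠ 0} : Set (Fin n)).ncard ≤ p}

/-- Unnormalised posterior density of the full vector `θ` given `Y^n = y` and `τ`. -/
def fullDens {n : ℕ} (τ : ℝ) (y θ : Fin n → ℝ) : ℝ := ∏ i, postDens τ (y i) (θ i)

/-- Posterior probability `Π(θ ∈ A | Y^n = y, τ)` of a set of vectors. -/
def fullPostProb {n : ℕ} (τ : ℝ) (y : Fin n → ℝ) (A : Set (Fin n → ℝ)) : ℝ :=
  (∫ θ in A, fullDens τ y θ) / ∫ θ, fullDens τ y θ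

/-- Posterior mean of the full vector (coordinatewise, by conditional independence). -/
def fullPostMean {n : ℕ} (τ : ℝ) (y : Fin n → ℝ) : Fin n → ℝ := fun i => postMean τ (y i)

/-- Euclidean distance on `ℝⁿ`. -/
def l2dist {n : ℕ} (a b : Fin n → ℝ) : ℝ := Real.sqrt (∑ i, (a i - b i) ^ 2)

/-- Marginal likelihood of `τ`. -/
def lik {n : ℕ} (τ : ℝ) (y : Fin n → ℝ) : ℝ := ∏ i, margDens τ (y i)

/-- Unnormalised hierarchical posterior weight of `τ` given the data. -/
def hierWeight {n : ℕ} (pr : ℝ → ℝ) (y : Fin n → ℝ) (τ : ℝ) : ℝ := pr τ * lik τ y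

/-- Hierarchical posterior distribution of `τ`. -/
def hierTauProb {n : ℕ} (pr : ℝ → ℝ) (y : Fin n → ℝ) (A : Set ℝ) : ℝ :=
  (∫ τ in A, hierWeight pr y τ) / ∫ τ, hierWeight pr y τ

/-- Hierarchical marginal posterior probability for coordinate `i`. -/
def hierPostProb {n : ℕ} (pr : ℝ → ℝ) (y : Fin n → ℝ) (i : Fin n) (A : Set ℝ) : ℝ :=
  (∫ τ, hierWeight pr y τ * postProb τ (y i) A) / ∫ τ, hierWeight pr y τ

/-- Hierarchical marginal posterior mean for coordinate `i`. -/
def hierPostMean {n : ℕ} (pr : ℝ → ℝ) (y : Fin n → ℝ) (i : Fin n) : ℝ :=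
  (∫ τ, hierWeight pr y τ * postMean τ (y i)) / ∫ τ, hierWeight pr y τ

/-- Hierarchical posterior probability of a set of vectors. -/
def hierFullPostProb {n : ℕ} (pr : ℝ → ℝ) (y : Fin n → ℝ) (A : Set (Fin n → ℝ)) : ℝ :=
  (∫ τ, pr τ * ∫ θ in A, fullDens τ y θ) / ∫ τ, pr τ * ∫ θ, fullDens τ y θ

/-- Hierarchical posterior mean vector. -/
def hierFullPostMean {n : ℕ} (pr : ℝ → ℝ) (y : Fin n → ℝ) : Fin n → ℝ :=
  fun i => hierPostMean pr y i

/-- The functions `I_k`. -/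
def Ik (τ k y : ℝ) : ℝ :=
  ∫ z in Set.Ioc (0 : ℝ) 1, z ^ k * (τ ^ 2 + (1 - τ ^ 2) * z)⁻¹ * Real.exp (y ^ 2 * z / 2)

/-- The function `m_τ`. -/
def mHS (τ y : ℝ) : ℝ :=
  y ^ 2 * ((Ik τ (1 / 2) y - Ik τ (3 / 2) y) / Ik τ (-(1 / 2)) y) -
    Ik τ (1 / 2) y / Ik τ (-(1 / 2)) y

/-- The excessive-bias restriction with witness `q`. -/
def EBRwith (n : ℕ) (A Cs C : ℝ) (θ : Fin n → ℝ) (q : ℕ) : Prop :=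
  1 ≤ q ∧
    (∑ i, if |θ i| < A * Real.sqrt (2 * Real.log ((n : ℝ) / (q : ℝ))) then (θ i) ^ 2 else 0)
        ≤ C * (q : ℝ) * Real.log ((n : ℝ) / (q : ℝ)) ∧
    (q : ℝ) / Cs ≤
      (({i | A * Real.sqrt (2 * Real.log ((n : ℝ) / (q : ℝ))) ≤ |θ i|} : Set (Fin n)).ncard : ℝ)

/-- The excessive-bias restriction. -/
def EBR (n : ℕ) (A Cs C : ℝ) (θ : Fin n → ℝ) : Prop := ∃ q, EBRwith n A Cs C θ q

/-- The class `Θ[p]`. -/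
def ThetaClass (n p : ℕ) (A Cs C : ℝ) : Set (Fin n → ℝ) :=
  {θ | θ ∈ nearlyBlack n p ∧ EBR n A Cs C θ}

/-- Smallest witness `q` in the excessive-bias restriction. -/
def qmin (n : ℕ) (A Cs C : ℝ) (θ : Fin n → ℝ) : ℕ := sInf {q | EBRwith n A Cs C θ q}

/-- `p̃(θ₀)`: the number of coordinates above threshold for the smallest witness `q`. -/
def ptilde (n : ℕ) (A Cs C : ℝ) (θ : Fin n → ℝ) : ℕ :=
  ({i | A * Real.sqrt (2 * Real.log ((n : ℝ) / (qmin n A Cs C θ : ℝ))) ≤ |θ i|} :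
    Set (Fin n)).ncard

/-!
Substituting `v = λτ` writes the horseshoe prior as a mixture of the centred normals of standard
deviation `v` over a half-Cauchy scale `v`. Given `v`, the posterior of `θ` is `N(κ y, κ)` with
`κ = v² / (1 + v²)`, so the law of total variance gives

  `var(θ | y, τ) = E κ + y² (E κ² - (E κ)²)`,

with expectations under the posterior of `v`, whose density in `v` is proportional to
`(1 + v²)^(-1/2) exp(-y² / (2 (1 + v²))) / (τ² + v²)`. As `τ` enters only through the rational
factor, the difference of two such expectations is explicit, and
`|var(θ | y, τ₁) - var(θ | y, τ₂)| ≲ (τ₂ - τ₁) (1 + y²) (1 + E κ / τ₁)`. Here `E κ ≤ 1`, and the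
posterior mass of `v ≈ τ₁` also yields `(1 + y²) E κ ≲ τ₁ exp(y² / 2)`. Hence the difference is at
most a multiple of `(τ₂ - τ₁) min(exp(y² / 2), (1 + y²) / τ₁)`, and the second moment of the minimum
under `N(0, 1)` is estimated by cutting slightly above `ζ`.
-/

/-- The shrinkage factor `κ(v)` of the conjugate normal model with prior scale `v = λτ`: given `v`,
the parameter `θ` has posterior law `N(κ(v) y, κ(v))`. -/
def shrinkage (v : ℝ) : ℝ := v ^ 2 / (1 + v ^ 2)

/-- The likelihood of the prior scale `v`, i.e. the `N(0, 1 + v²)` density of the observation `y`,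
without its factor `(2π)^(-1/2)`. -/
def scaleLik (y v : ℝ) : ℝ := (√(1 + v ^ 2))⁻¹ * exp (-(y ^ 2) / (2 * (1 + v ^ 2)))

/-- The unnormalised posterior density on `v > 0` of the prior scale `v = λτ`, whose prior is the
half-Cauchy law of scale `τ`. -/
def scaleDens (τ y v : ℝ) : ℝ := scaleLik y v / (τ ^ 2 + v ^ 2)

/-- The integral of `f` against the unnormalised posterior of the prior scale. -/
def scaleIntegral (τ y : ℝ) (f : ℝ → ℝ) : ℝ := ∫ v in Ioi (0 : ℝ), f v * scaleDens τ y v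

/-- The posterior expectation of `f` at the prior scale. -/
def scaleMean (τ y : ℝ) (f : ℝ → ℝ) : ℝ := scaleIntegral τ y f / scaleIntegral τ y fun _ ↦ 1

lemma shrinkage_nonneg (v : ℝ) : 0 ≤ shrinkage v := by unfold shrinkage; positivity

lemma shrinkage_le_one (v : ℝ) : shrinkage v ≤ 1 := by
  rw [shrinkage, div_le_one (by positivity)]
  linarith

lemma shrinkage_pos {v : ℝ} (hv : 0 < v) : 0 < shrinkage v := by unfold shrinkage; positivity

@[fun_prop]
lemma measurable_shrinkage : Measurable shrinkage := by unfold shrinkage; fun_prop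

lemma shrinkage_sq_le (v : ℝ) : shrinkage v ^ 2 ≤ shrinkage v :=
  pow_le_of_le_one (shrinkage_nonneg v) (shrinkage_le_one v) two_ne_zero

lemma scaleLik_pos (y v : ℝ) : 0 < scaleLik y v := by unfold scaleLik; positivity

lemma scaleLik_le_exp (y v : ℝ) : scaleLik y v ≤ exp (-(y ^ 2) / (2 * (1 + v ^ 2))) := by
  refine mul_le_of_le_one_left (exp_pos _).le (inv_le_one_of_one_le₀ ?_)
  rw [one_le_sqrt]
  linarith [sq_nonneg v]

lemma scaleLik_le_one (y v : ℝ) : scaleLik y v ≤ 1 := by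
  refine (scaleLik_le_exp y v).trans (exp_le_one_iff.2 ?_)
  rw [neg_div]
  exact neg_nonpos.2 (by positivity)

lemma exp_neg_sq_div_le (y : ℝ) {v w : ℝ} (hv : 0 ≤ v) (hvw : v ≤ w) :
    exp (-(y ^ 2) / (2 * (1 + v ^ 2))) ≤ exp (-(y ^ 2) / (2 * (1 + w ^ 2))) := by
  rw [exp_le_exp, neg_div, neg_div, neg_le_neg_iff]
  gcongr

@[fun_prop]
lemma measurable_scaleDens (τ y : ℝ) : Measurable (scaleDens τ y) := by
  unfold scaleDens scaleLik
  fun_prop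

lemma integral_sub_sq_gaussianReal (m c : ℝ) (s : ℝ≥0) :
    ∫ x, (x - c) ^ 2 ∂gaussianReal m s = s + (m - c) ^ 2 := by
  have second_moment (μ : ℝ) : ∫ x, x ^ 2 ∂gaussianReal μ s = s + μ ^ 2 := by
    have h := variance_eq_sub (memLp_id_gaussianReal (μ := μ) (v := s) 2)
    simp only [variance_id_gaussianReal, Pi.pow_apply, id_eq, integral_id_gaussianReal] at h
    linarith
  rw [← second_moment, ← gaussianReal_map_sub_const, integral_map (by fun_prop) (by fun_prop)]

lemma integrable_pow_gaussianReal (m : ℝ) (s : ℝ≥0) (k : ℕ) :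
    Integrable (fun x : ℝ ↦ x ^ k) (gaussianReal m s) :=
  (memLp_id_gaussianReal (k : ℝ≥0)).integrable_norm_pow'.mono' (by fun_prop)
    (.of_forall fun x ↦ by simp)

lemma integrable_quadratic_gaussianReal (m : ℝ) (s : ℝ≥0) (C : ℝ) :
    Integrable (fun x : ℝ ↦ C * (1 + x ^ 2)) (gaussianReal m s) :=
  ((integrable_const 1).add (integrable_pow_gaussianReal m s 2)).const_mul C

section ConjugateNormal

lemma phiN_mul_phiN_div {v : ℝ} (hv : 0 < v) (y θ : ℝ) :
    phiN (y - θ) * (phiN (θ / v) / v) = (√(2 * π))⁻¹ *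
      (gaussianPDFReal (shrinkage v * y) (shrinkage v).toNNReal θ * scaleLik y v) := by
  have sqrt_var : √(2 * π * shrinkage v) = √(2 * π) * (v / √(1 + v ^ 2)) := by
    rw [sqrt_mul (by positivity), shrinkage, sqrt_div (by positivity), sqrt_sq hv.le]
  have complete_square : exp (-((y - θ) ^ 2) / 2) * exp (-((θ / v) ^ 2) / 2) =
      exp (-(θ - shrinkage v * y) ^ 2 / (2 * shrinkage v)) *
        exp (-(y ^ 2) / (2 * (1 + v ^ 2))) := by
    rw [← exp_add, ← exp_add, shrinkage]
    congr 1
    field_simp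
    ring
  rw [gaussianPDFReal, coe_toNNReal _ (shrinkage_nonneg v), sqrt_var, scaleLik]
  calc phiN (y - θ) * (phiN (θ / v) / v)
      = (√(2 * π))⁻¹ * (√(2 * π))⁻¹ / v *
          (exp (-((y - θ) ^ 2) / 2) * exp (-((θ / v) ^ 2) / 2)) := by unfold phiN; ring
    _ = _ := by rw [complete_square]; field_simp

lemma integrable_mul_gaussianPDFReal {m : ℝ} {s : ℝ≥0} (hs : s ≠ 0) {f : ℝ → ℝ}
    (hf : Integrable f (gaussianReal m s)) : Integrable fun θ ↦ f θ * gaussianPDFReal m s θ := by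
  rw [gaussianReal_of_var_ne_zero _ hs, integrable_withDensity_iff_integrable_smul'
    (measurable_gaussianPDF _ _) (.of_forall fun _ ↦ gaussianPDF_lt_top)] at hf
  simpa only [toReal_gaussianPDF, smul_eq_mul, mul_comm] using hf

lemma integral_mul_gaussianPDFReal (m : ℝ) {s : ℝ≥0} (hs : s ≠ 0) (f : ℝ → ℝ) :
    ∫ θ, f θ * gaussianPDFReal m s θ = ∫ θ, f θ ∂gaussianReal m s := by
  simp only [integral_gaussianReal_eq_integral_smul hs, smul_eq_mul, mul_comm]

end ConjugateNormal

section HalfCauchy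

variable {τ : ℝ}

lemma integral_comp_mul_halfCauchy (hτ : 0 < τ) (f : ℝ → ℝ) :
    ∫ l in Ioi (0 : ℝ), f (l * τ) * (2 / (π * (1 + l ^ 2))) =
      2 * τ / π * ∫ v in Ioi (0 : ℝ), f v / (τ ^ 2 + v ^ 2) := by
  have h := integral_comp_mul_right_Ioi (fun v ↦ f v * (2 * τ ^ 2 / (π * (τ ^ 2 + v ^ 2)))) 0 hτ
  rw [zero_mul, smul_eq_mul, ← integral_const_mul] at h
  rw [← integral_const_mul]
  convert! h using 3 with l v
  · congr 1
    field_simp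
  · field_simp

lemma integral_Ioi_inv_sq_add_sq (hτ : 0 < τ) :
    ∫ v in Ioi (0 : ℝ), (τ ^ 2 + v ^ 2)⁻¹ = π / (2 * τ) := by
  have half_cauchy : ∫ l in Ioi (0 : ℝ), 1 * (2 / (π * (1 + l ^ 2))) = 1 := by
    have (l : ℝ) : 1 * (2 / (π * (1 + l ^ 2))) = 2 / π * (1 + l ^ 2)⁻¹ := by field_simp
    simp_rw [this, integral_const_mul, integral_Ioi_inv_one_add_sq, arctan_zero]
    field_simp
    ring
  have h := integral_comp_mul_halfCauchy hτ fun _ ↦ 1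
  rw [half_cauchy] at h
  simp only [one_div] at h
  field_simp at h ⊢
  linarith

lemma integrable_inv_sq_add_sq (hτ : 0 < τ) : Integrable fun v : ℝ ↦ (τ ^ 2 + v ^ 2)⁻¹ := by
  refine ((integrable_inv_one_add_sq.comp_div hτ.ne').const_mul (τ ^ 2)⁻¹).congr
    (.of_forall fun v ↦ ?_)
  simp only
  field_simp

lemma gHS_eq_integral (hτ : 0 < τ) (θ : ℝ) :
    gHS τ θ = 2 * τ / π * ∫ v in Ioi (0 : ℝ), phiN (θ / v) / v / (τ ^ 2 + v ^ 2) :=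
  integral_comp_mul_halfCauchy hτ fun v ↦ phiN (θ / v) / v

lemma postDens_eq_integral (hτ : 0 < τ) (y θ : ℝ) :
    postDens τ y θ = 2 * τ / π * (√(2 * π))⁻¹ * ∫ v in Ioi (0 : ℝ),
      gaussianPDFReal (shrinkage v * y) (shrinkage v).toNNReal θ * scaleDens τ y v := by
  calc postDens τ y θ
      = 2 * τ / π * ∫ v in Ioi (0 : ℝ), phiN (y - θ) * (phiN (θ / v) / v / (τ ^ 2 + v ^ 2)) := by
        rw [postDens, gHS_eq_integral hτ, mul_left_comm, integral_const_mul]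
    _ = 2 * τ / π * ∫ v in Ioi (0 : ℝ), (√(2 * π))⁻¹ *
          (gaussianPDFReal (shrinkage v * y) (shrinkage v).toNNReal θ * scaleDens τ y v) := by
        congr 1
        refine setIntegral_congr_fun measurableSet_Ioi fun v hv ↦ ?_
        rw [← mul_div_assoc, phiN_mul_phiN_div hv, scaleDens]
        ring
    _ = _ := by rw [integral_const_mul, mul_assoc]

lemma scaleDens_pos (hτ : 0 < τ) (y v : ℝ) : 0 < scaleDens τ y v := by
  have := scaleLik_pos y v
  unfold scaleDens
  positivity

lemma scaleDens_le_inv (τ y v : ℝ) : scaleDens τ y v ≤ (τ ^ 2 + v ^ 2)⁻¹ := by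
  rw [scaleDens, ← one_div]
  gcongr
  exact scaleLik_le_one y v

lemma integrableOn_mul_scaleDens (hτ : 0 < τ) (y : ℝ) {f : ℝ → ℝ} (hf : Measurable f) {C : ℝ}
    (hC : ∀ v, |f v| ≤ C) : IntegrableOn (fun v ↦ f v * scaleDens τ y v) (Ioi 0) := by
  refine ((integrable_inv_sq_add_sq hτ).const_mul C).integrableOn.mono' (by fun_prop)
    (.of_forall fun v ↦ ?_)
  rw [norm_mul, norm_eq_abs, norm_of_nonneg (scaleDens_pos hτ y v).le]
  exact mul_le_mul (hC v) (scaleDens_le_inv τ y v) (scaleDens_pos hτ y v).le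
    ((abs_nonneg _).trans (hC v))

end HalfCauchy

section Mixture

variable {τ : ℝ}

lemma integral_norm_gaussianReal_shrinkage_le (y v : ℝ) {f : ℝ → ℝ} {C : ℝ}
    (hC : ∀ θ, |f θ| ≤ C * (1 + θ ^ 2)) :
    ∫ θ, ‖f θ‖ ∂gaussianReal (shrinkage v * y) (shrinkage v).toNNReal ≤ C * (2 + y ^ 2) := by
  have hC0 : 0 ≤ C := by simpa using (abs_nonneg _).trans (hC 0)
  have hκ := shrinkage_sq_le v
  have hκ₁ := shrinkage_le_one v
  set κ := shrinkage v
  calc ∫ θ, ‖f θ‖ ∂gaussianReal (κ * y) κ.toNNReal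
      ≤ ∫ θ, C * (1 + θ ^ 2) ∂gaussianReal (κ * y) κ.toNNReal :=
        integral_mono_of_nonneg (.of_forall fun _ ↦ norm_nonneg _)
          (integrable_quadratic_gaussianReal _ _ C) (.of_forall hC)
    _ = C * (1 + (κ + (κ * y) ^ 2)) := by
        have second_moment := integral_sub_sq_gaussianReal (κ * y) 0 κ.toNNReal
        simp only [sub_zero] at second_moment
        rw [integral_const_mul, integral_add (integrable_const 1)
          (integrable_pow_gaussianReal _ _ 2), second_moment]
        simp [κ, shrinkage_nonneg]
    _ ≤ C * (2 + y ^ 2) := by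
        have : κ ^ 2 * y ^ 2 ≤ 1 * y ^ 2 := by gcongr; exact hκ.trans hκ₁
        refine mul_le_mul_of_nonneg_left ?_ hC0
        linarith [mul_pow κ y 2]

lemma integrable_mul_gaussianPDFReal_mul_scaleDens (hτ : 0 < τ) (y : ℝ) {f : ℝ → ℝ}
    (hf : Measurable f) {C : ℝ} (hC : ∀ θ, |f θ| ≤ C * (1 + θ ^ 2)) :
    Integrable (fun p : ℝ × ℝ ↦ f p.1 *
      gaussianPDFReal (shrinkage p.2 * y) (shrinkage p.2).toNNReal p.1 * scaleDens τ y p.2)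
      (volume.prod (volume.restrict (Ioi 0))) := by
  have hmeas : Measurable fun p : ℝ × ℝ ↦ f p.1 *
      gaussianPDFReal (shrinkage p.2 * y) (shrinkage p.2).toNNReal p.1 * scaleDens τ y p.2 := by
    unfold gaussianPDFReal
    fun_prop
  have hpos : ∀ᵐ v ∂volume.restrict (Ioi (0 : ℝ)), 0 < v := ae_restrict_mem measurableSet_Ioi
  have hf_int (m : ℝ) (s : ℝ≥0) : Integrable f (gaussianReal m s) :=
    (integrable_quadratic_gaussianReal m s C).mono' hf.aestronglyMeasurable (.of_forall hC)
  rw [integrable_prod_iff' hmeas.aestronglyMeasurable]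
  constructor
  · filter_upwards [hpos] with v hv
    exact (integrable_mul_gaussianPDFReal (toNNReal_pos.2 (shrinkage_pos hv)).ne'
      (hf_int _ _)).mul_const _
  · refine ((integrable_inv_sq_add_sq hτ).const_mul (C * (2 + y ^ 2))).integrableOn.mono'
      hmeas.aestronglyMeasurable.norm.prod_swap.integral_prod_right' ?_
    filter_upwards [hpos] with v hv
    have hρ := (scaleDens_pos hτ y v).le
    have hbound := integral_norm_gaussianReal_shrinkage_le y v hC
    rw [norm_of_nonneg (integral_nonneg fun _ ↦ norm_nonneg _)]
    simp only [norm_mul, norm_of_nonneg hρ, norm_of_nonneg (gaussianPDFReal_nonneg _ _ _)]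
    rw [integral_mul_const,
      integral_mul_gaussianPDFReal _ (toNNReal_pos.2 (shrinkage_pos hv)).ne' fun θ ↦ ‖f θ‖]
    exact mul_le_mul hbound (scaleDens_le_inv τ y v) hρ
      ((integral_nonneg fun _ ↦ norm_nonneg _).trans hbound)

lemma integral_mul_postDens (hτ : 0 < τ) (y : ℝ) {f : ℝ → ℝ} (hf : Measurable f) {C : ℝ}
    (hC : ∀ θ, |f θ| ≤ C * (1 + θ ^ 2)) :
    ∫ θ, f θ * postDens τ y θ = 2 * τ / π * (√(2 * π))⁻¹ * scaleIntegral τ y fun v ↦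
      ∫ θ, f θ ∂gaussianReal (shrinkage v * y) (shrinkage v).toNNReal := by
  simp_rw [postDens_eq_integral hτ, mul_left_comm (f _), integral_const_mul,
    ← integral_const_mul (f _), ← mul_assoc (f _)]
  congr 1
  rw [integral_integral_swap (integrable_mul_gaussianPDFReal_mul_scaleDens hτ y hf hC),
    scaleIntegral]
  refine setIntegral_congr_fun measurableSet_Ioi fun v hv ↦ ?_
  rw [integral_mul_const,
    integral_mul_gaussianPDFReal _ (toNNReal_pos.2 (shrinkage_pos hv)).ne']

lemma integral_mul_postDens_div_margDens (hτ : 0 < τ) (y : ℝ) {f : ℝ → ℝ} (hf : Measurable f)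
    {C : ℝ} (hC : ∀ θ, |f θ| ≤ C * (1 + θ ^ 2)) :
    (∫ θ, f θ * postDens τ y θ) / margDens τ y = scaleMean τ y fun v ↦
      ∫ θ, f θ ∂gaussianReal (shrinkage v * y) (shrinkage v).toNNReal := by
  have hmarg : margDens τ y =
      2 * τ / π * (√(2 * π))⁻¹ * scaleIntegral τ y fun _ ↦ 1 := by
    simpa [margDens] using integral_mul_postDens hτ y (f := fun _ ↦ 1) measurable_const (C := 1)
      fun θ ↦ by simp [sq_nonneg]
  rw [integral_mul_postDens hτ y hf hC, hmarg, mul_div_mul_left _ _ (by positivity), scaleMean]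

end Mixture

section ScaleMean

variable {τ : ℝ} {f g : ℝ → ℝ}

lemma scaleIntegral_one_pos (hτ : 0 < τ) (y : ℝ) : 0 < scaleIntegral τ y fun _ ↦ 1 := by
  have hint := integrableOn_mul_scaleDens hτ y (f := fun _ ↦ 1) measurable_const (C := 1) (by simp)
  have hpos (v : ℝ) : 0 < 1 * scaleDens τ y v := by simpa using scaleDens_pos hτ y v
  have hsupp : Function.support (fun v ↦ 1 * scaleDens τ y v) = univ :=
    eq_univ_of_forall fun v ↦ (hpos v).ne'
  rw [scaleIntegral, integral_pos_iff_support_of_nonneg (fun v ↦ (hpos v).le) hint, hsupp]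
  simp

lemma scaleIntegral_mono (hτ : 0 < τ) (y : ℝ) (hf : ∀ v, 0 ≤ f v) (hfg : ∀ v, f v ≤ g v)
    (hg : Measurable g) {C : ℝ} (hC : ∀ v, g v ≤ C) :
    scaleIntegral τ y f ≤ scaleIntegral τ y g := by
  have hρ (v : ℝ) := (scaleDens_pos hτ y v).le
  exact integral_mono_of_nonneg (.of_forall fun v ↦ mul_nonneg (hf v) (hρ v))
    (integrableOn_mul_scaleDens hτ y hg fun v ↦ by
      rw [abs_of_nonneg ((hf v).trans (hfg v))]
      exact hC v)
    (.of_forall fun v ↦ mul_le_mul_of_nonneg_right (hfg v) (hρ v))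

lemma scaleMean_mono (hτ : 0 < τ) (y : ℝ) (hf : ∀ v, 0 ≤ f v) (hfg : ∀ v, f v ≤ g v)
    (hg : Measurable g) {C : ℝ} (hC : ∀ v, g v ≤ C) : scaleMean τ y f ≤ scaleMean τ y g :=
  div_le_div_of_nonneg_right (scaleIntegral_mono hτ y hf hfg hg hC) (scaleIntegral_one_pos hτ y).le

lemma scaleMean_nonneg (hτ : 0 < τ) (y : ℝ) (hf : ∀ v, 0 ≤ f v) : 0 ≤ scaleMean τ y f :=
  div_nonneg (integral_nonneg fun v ↦ mul_nonneg (hf v) (scaleDens_pos hτ y v).le)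
    (scaleIntegral_one_pos hτ y).le

lemma scaleMean_const_mul (τ y c : ℝ) (f : ℝ → ℝ) :
    (scaleMean τ y fun v ↦ c * f v) = c * scaleMean τ y f := by
  simp only [scaleMean, scaleIntegral, mul_assoc c, integral_const_mul, mul_div_assoc]

lemma scaleMean_const (hτ : 0 < τ) (y c : ℝ) : (scaleMean τ y fun _ ↦ c) = c := by
  have h := scaleMean_const_mul τ y c fun _ ↦ 1
  rwa [scaleMean, scaleMean, div_self (scaleIntegral_one_pos hτ y).ne', mul_one, ← scaleMean] at h

lemma scaleMean_le_one (hτ : 0 < τ) (y : ℝ) (hf : ∀ v, 0 ≤ f v) (hf₁ : ∀ v, f v ≤ 1) :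
    scaleMean τ y f ≤ 1 :=
  (scaleMean_mono hτ y hf hf₁ measurable_const fun _ ↦ le_rfl).trans_eq (scaleMean_const hτ y 1)

lemma scaleMean_add (hτ : 0 < τ) (y : ℝ) (hf : Measurable f) {C : ℝ} (hC : ∀ v, |f v| ≤ C)
    (hg : Measurable g) {D : ℝ} (hD : ∀ v, |g v| ≤ D) :
    (scaleMean τ y fun v ↦ f v + g v) = scaleMean τ y f + scaleMean τ y g := by
  simp only [scaleMean, scaleIntegral, add_mul]
  rw [integral_add (integrableOn_mul_scaleDens hτ y hf hC) (integrableOn_mul_scaleDens hτ y hg hD),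
    add_div]

end ScaleMean

section PosteriorMoments

variable {τ : ℝ}

lemma postMean_eq (hτ : 0 < τ) (y : ℝ) : postMean τ y = y * scaleMean τ y shrinkage := by
  have h := integral_mul_postDens_div_margDens hτ y measurable_id (C := 1) fun θ ↦ by
    rw [id_eq, one_mul, abs_le]
    constructor <;> nlinarith [sq_nonneg (θ + 1), sq_nonneg (θ - 1)]
  simp only [id_eq, integral_id_gaussianReal, mul_comm _ y] at h
  rw [postMean, h, scaleMean_const_mul]

lemma postVar_eq (hτ : 0 < τ) (y : ℝ) :
    postVar τ y = scaleMean τ y shrinkage + y ^ 2 *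
      ((scaleMean τ y fun v ↦ shrinkage v ^ 2) - scaleMean τ y shrinkage ^ 2) := by
  set m := postMean τ y with hm
  have quadratic_bound (θ : ℝ) : |(θ - m) ^ 2| ≤ 2 * (1 + m ^ 2) * (1 + θ ^ 2) := by
    rw [abs_of_nonneg (sq_nonneg _)]
    nlinarith [sq_nonneg (θ + m), sq_nonneg (θ * m)]
  have bound_mul_pow (c : ℝ) (k : ℕ) (v : ℝ) : |c * shrinkage v ^ k| ≤ |c| := by
    rw [abs_mul, abs_of_nonneg (pow_nonneg (shrinkage_nonneg v) k)]
    exact mul_le_of_le_one_right (abs_nonneg c)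
      (pow_le_one₀ (shrinkage_nonneg v) (shrinkage_le_one v))
  have second_moment (v : ℝ) :
      ∫ θ, (θ - m) ^ 2 ∂gaussianReal (shrinkage v * y) (shrinkage v).toNNReal =
        (1 - 2 * y * m) * shrinkage v ^ 1 +
          (y ^ 2 * shrinkage v ^ 2 + m ^ 2 * shrinkage v ^ 0) := by
    rw [integral_sub_sq_gaussianReal, coe_toNNReal _ (shrinkage_nonneg v)]
    ring
  rw [postVar, ← hm, integral_mul_postDens_div_margDens hτ y (by fun_prop) quadratic_bound]
  simp_rw [second_moment]
  rw [scaleMean_add hτ y (by fun_prop) (bound_mul_pow _ 1) (D := |y ^ 2| + |m ^ 2|) (by fun_prop)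
      fun v ↦ (abs_add_le _ _).trans (add_le_add (bound_mul_pow _ 2 v) (bound_mul_pow _ 0 v)),
    scaleMean_add hτ y (by fun_prop) (bound_mul_pow _ 2) (by fun_prop) (bound_mul_pow _ 0)]
  simp only [scaleMean_const_mul, pow_one, pow_zero, scaleMean_const hτ, hm, postMean_eq hτ]
  ring

end PosteriorMoments

section Perturbation

variable {a b t : ℝ} {f : ℝ → ℝ}

lemma scaleIntegral_sub (ha : 0 < a) (hb : 0 < b) (y : ℝ) (hf : Measurable f) {C : ℝ}
    (hC : ∀ v, |f v| ≤ C) :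
    scaleIntegral a y f - scaleIntegral b y f =
      (b ^ 2 - a ^ 2) * scaleIntegral b y fun v ↦ f v * (a ^ 2 + v ^ 2)⁻¹ := by
  simp only [scaleIntegral]
  rw [← integral_sub (integrableOn_mul_scaleDens ha y hf hC)
    (integrableOn_mul_scaleDens hb y hf hC), ← integral_const_mul]
  congr 1 with v
  unfold scaleDens
  field_simp
  ring

lemma scaleMean_sub (ha : 0 < a) (hb : 0 < b) (y : ℝ) (hf : Measurable f) {C : ℝ}
    (hC : ∀ v, |f v| ≤ C) :
    scaleMean a y f - scaleMean b y f = (b ^ 2 - a ^ 2) *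
      ((scaleMean b y fun v ↦ f v * (a ^ 2 + v ^ 2)⁻¹) -
        scaleMean a y f * scaleMean b y fun v ↦ (a ^ 2 + v ^ 2)⁻¹) := by
  have numerator := scaleIntegral_sub ha hb y hf hC
  have denominator := scaleIntegral_sub ha hb y (f := fun _ ↦ 1) measurable_const (C := 1) (by simp)
  have hIa := (scaleIntegral_one_pos ha y).ne'
  have hIb := (scaleIntegral_one_pos hb y).ne'
  simp only [one_mul] at denominator
  simp only [scaleMean]
  generalize (scaleIntegral b y fun v ↦ f v * (a ^ 2 + v ^ 2)⁻¹) = J at numerator ⊢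
  generalize (scaleIntegral b y fun v ↦ (a ^ 2 + v ^ 2)⁻¹) = W at denominator ⊢
  field_simp
  linear_combination scaleIntegral a y (fun _ ↦ 1) * numerator - scaleIntegral a y f * denominator

lemma exp_div_le_scaleIntegral_one (ht : 0 < t) (ht₁ : t ≤ 1) (y : ℝ) :
    exp (-(y ^ 2) / (2 * (1 + t ^ 2))) / (15 * t) ≤ scaleIntegral t y fun _ ↦ 1 := by
  set E := exp (-(y ^ 2) / (2 * (1 + t ^ 2)))
  have hint : IntegrableOn (fun v ↦ 1 * scaleDens t y v) (Ioi 0) :=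
    integrableOn_mul_scaleDens ht y measurable_const (C := 1) (by simp)
  have hsub : Ioc t (2 * t) ⊆ Ioi 0 := fun v hv ↦ ht.trans hv.1
  have lower (v : ℝ) (hv : v ∈ Ioc t (2 * t)) : E / (15 * t ^ 2) ≤ 1 * scaleDens t y v := by
    have hv₂ : v ^ 2 ≤ 4 * t ^ 2 := by nlinarith [hv.1, hv.2]
    have hsqrt : √(1 + v ^ 2) ≤ 3 := sqrt_le_iff.2 ⟨by norm_num, by nlinarith⟩
    have hE : E ≤ exp (-(y ^ 2) / (2 * (1 + v ^ 2))) := exp_neg_sq_div_le y ht.le hv.1.le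
    calc E / (15 * t ^ 2) = 3⁻¹ * E / (t ^ 2 + 4 * t ^ 2) := by field_simp; ring
      _ ≤ (√(1 + v ^ 2))⁻¹ * exp (-(y ^ 2) / (2 * (1 + v ^ 2))) / (t ^ 2 + v ^ 2) := by gcongr
      _ = 1 * scaleDens t y v := (one_mul _).symm
  calc E / (15 * t) = ∫ _ in Ioc t (2 * t), E / (15 * t ^ 2) := by
        rw [setIntegral_const, volume_real_Ioc_of_le (by linarith), smul_eq_mul]
        field_simp
        ring
    _ ≤ ∫ v in Ioc t (2 * t), 1 * scaleDens t y v :=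
        setIntegral_mono_on (by simp) (hint.mono_set hsub) measurableSet_Ioc lower
    _ ≤ scaleIntegral t y fun _ ↦ 1 :=
        setIntegral_mono_set hint (.of_forall fun v ↦ by
          simpa using (scaleDens_pos ht y v).le) hsub.eventuallyLE

lemma inv_sq_add_sq_mul_scaleDens_le (ha : 0 < a) (hab : a ≤ b) (y : ℝ) {v : ℝ} (hv : 0 < v) :
    (a ^ 2 + v ^ 2)⁻¹ * scaleDens b y v ≤ (a * b)⁻¹ * (1 * scaleDens b y v) +
      exp (-(y ^ 2) / (2 * (1 + b ^ 2))) / b ^ 2 * (a ^ 2 + v ^ 2)⁻¹ := by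
  have hb : 0 < b := ha.trans_le hab
  have hρ := (scaleDens_pos hb y v).le
  rcases le_total b v with hbv | hvb
  · have : (a ^ 2 + v ^ 2)⁻¹ ≤ (a * b)⁻¹ := by gcongr; nlinarith
    rw [one_mul]
    exact le_add_of_le_of_nonneg (mul_le_mul_of_nonneg_right this hρ) (by positivity)
  · have : scaleDens b y v ≤ exp (-(y ^ 2) / (2 * (1 + b ^ 2))) / b ^ 2 := by
      unfold scaleDens
      gcongr
      · exact (scaleLik_le_exp y v).trans (exp_neg_sq_div_le y hv.le hvb)
      · exact le_add_of_nonneg_right (sq_nonneg v)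
    rw [mul_comm (_ / b ^ 2)]
    exact le_add_of_nonneg_of_le (by positivity) (by gcongr)

lemma scaleMean_inv_sq_add_sq_le (ha : 0 < a) (hab : a ≤ b) (hb₁ : b ≤ 1) (y : ℝ) :
    (scaleMean b y fun v ↦ (a ^ 2 + v ^ 2)⁻¹) ≤ 31 / (a * b) := by
  have hb : 0 < b := ha.trans_le hab
  set E := exp (-(y ^ 2) / (2 * (1 + b ^ 2)))
  set I := scaleIntegral b y fun _ ↦ 1 with hI
  have hIpos : 0 < I := scaleIntegral_one_pos hb y
  have hE : E ≤ 15 * b * I := by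
    have := exp_div_le_scaleIntegral_one hb hb₁ y
    rwa [div_le_iff₀' (by positivity)] at this
  have hone := integrableOn_mul_scaleDens hb y (f := fun _ ↦ 1) measurable_const (C := 1) (by simp)
  have hw := (integrable_inv_sq_add_sq ha).integrableOn (s := Ioi 0)
  rw [scaleMean, ← hI, div_le_iff₀ hIpos]
  calc scaleIntegral b y (fun v ↦ (a ^ 2 + v ^ 2)⁻¹)
      ≤ ∫ v in Ioi (0 : ℝ),
          ((a * b)⁻¹ * (1 * scaleDens b y v) + E / b ^ 2 * (a ^ 2 + v ^ 2)⁻¹) := by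
        refine integral_mono_of_nonneg (.of_forall fun v ↦ ?_)
          ((hone.const_mul _).add (hw.const_mul _)) ?_
        · have := scaleDens_pos hb y v
          positivity
        · filter_upwards [ae_restrict_mem measurableSet_Ioi] with v hv
          exact inv_sq_add_sq_mul_scaleDens_le ha hab y hv
    _ = (a * b)⁻¹ * I + E / b ^ 2 * (π / (2 * a)) := by
        rw [integral_add (hone.const_mul _) (hw.const_mul _), integral_const_mul (a * b)⁻¹,
          integral_const_mul (E / b ^ 2), integral_Ioi_inv_sq_add_sq ha, hI, scaleIntegral]
    _ ≤ (a * b)⁻¹ * I + 15 * b * I / b ^ 2 * (4 / (2 * a)) := by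
        gcongr
        exact pi_le_four
    _ = 31 / (a * b) * I := by field_simp; norm_num

lemma shrinkage_mul_inv_sq_add_sq_le (ha : 0 < a) (v : ℝ) :
    shrinkage v * (a ^ 2 + v ^ 2)⁻¹ ≤ (1 + v ^ 2)⁻¹ := by
  rw [shrinkage, div_eq_mul_inv, mul_right_comm, ← div_eq_mul_inv]
  exact mul_le_of_le_one_left (by positivity)
    ((div_le_one (by positivity)).2 (le_add_of_nonneg_left (sq_nonneg a)))

lemma abs_scaleMean_sub_le_of_le_one (ha : 0 < a) (hab : a ≤ b) (hb₁ : b ≤ 1) (y : ℝ)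
    (hf : Measurable f) (hf₀ : ∀ v, 0 ≤ f v) (hfκ : ∀ v, f v ≤ shrinkage v) :
    |scaleMean a y f - scaleMean b y f| ≤ (b - a) * (2 + 62 * scaleMean a y shrinkage / a) := by
  have hb : 0 < b := ha.trans_le hab
  have : 0 ≤ b - a := sub_nonneg.2 hab
  have hw (v : ℝ) : 0 ≤ (a ^ 2 + v ^ 2)⁻¹ := by positivity
  have hfw (v : ℝ) : f v * (a ^ 2 + v ^ 2)⁻¹ ≤ 1 :=
    (mul_le_mul_of_nonneg_right (hfκ v) (hw v)).trans
      ((shrinkage_mul_inv_sq_add_sq_le ha v).trans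
        (inv_le_one_of_one_le₀ (le_add_of_nonneg_right (sq_nonneg v))))
  have hMf := scaleMean_nonneg ha y hf₀
  have hMκ : scaleMean a y f ≤ scaleMean a y shrinkage :=
    scaleMean_mono ha y hf₀ hfκ measurable_shrinkage shrinkage_le_one
  have hMfw₀ := scaleMean_nonneg hb y fun v ↦ mul_nonneg (hf₀ v) (hw v)
  have hMfw₁ := scaleMean_le_one hb y (fun v ↦ mul_nonneg (hf₀ v) (hw v)) hfw
  have hMw₀ := scaleMean_nonneg hb y hw
  have hMw := scaleMean_inv_sq_add_sq_le ha hab hb₁ y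
  have hprod₀ := mul_nonneg hMf hMw₀
  have hprod : scaleMean a y f * (scaleMean b y fun v ↦ (a ^ 2 + v ^ 2)⁻¹) ≤
      scaleMean a y shrinkage * (31 / (a * b)) := mul_le_mul hMκ hMw hMw₀ (hMf.trans hMκ)
  have hf_abs (v : ℝ) : |f v| ≤ 1 :=
    (abs_of_nonneg (hf₀ v)).trans_le ((hfκ v).trans (shrinkage_le_one v))
  rw [scaleMean_sub ha hb y hf hf_abs, abs_mul,
    abs_of_nonneg (sub_nonneg.2 (pow_le_pow_left₀ ha.le hab 2))]
  calc (b ^ 2 - a ^ 2) * |_|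
      ≤ (b - a) * (2 * b) * (1 + scaleMean a y shrinkage * (31 / (a * b))) := by
        refine mul_le_mul (by nlinarith) (abs_le.2 ⟨?_, ?_⟩) (abs_nonneg _) (by positivity) <;>
          linarith
    _ = (b - a) * (2 * b + 62 * scaleMean a y shrinkage / a) := by field_simp; ring
    _ ≤ (b - a) * (2 + 62 * scaleMean a y shrinkage / a) := by gcongr; linarith

lemma abs_scaleMean_sub_le (ha : 0 < a) (ha₁ : a ≤ 1 / 2) (hab : a ≤ b) (y : ℝ)
    (hf : Measurable f) (hf₀ : ∀ v, 0 ≤ f v) (hfκ : ∀ v, f v ≤ shrinkage v) :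
    |scaleMean a y f - scaleMean b y f| ≤ (b - a) * (2 + 62 * scaleMean a y shrinkage / a) := by
  rcases le_or_gt b 1 with hb₁ | hb₁
  · exact abs_scaleMean_sub_le_of_le_one ha hab hb₁ y hf hf₀ hfκ
  · have hf₁ (v : ℝ) : f v ≤ 1 := (hfκ v).trans (shrinkage_le_one v)
    have hMa₀ := scaleMean_nonneg ha y hf₀
    have hMa₁ := scaleMean_le_one ha y hf₀ hf₁
    have hMb₀ := scaleMean_nonneg (ha.trans_le hab) y hf₀
    have hMb₁ := scaleMean_le_one (ha.trans_le hab) y hf₀ hf₁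
    have hMκ : 0 ≤ 62 * scaleMean a y shrinkage / a :=
      div_nonneg (mul_nonneg (by norm_num) (scaleMean_nonneg ha y shrinkage_nonneg)) ha.le
    calc |scaleMean a y f - scaleMean b y f| ≤ 1 := abs_le.2 ⟨by linarith, by linarith⟩
      _ ≤ (b - a) * (2 + 62 * scaleMean a y shrinkage / a) := by nlinarith

end Perturbation

section PosteriorVariance

variable {a b t : ℝ}

lemma hasDerivAt_sin_arctan (v : ℝ) :
    HasDerivAt (fun v ↦ sin (arctan v)) ((√(1 + v ^ 2))⁻¹ / (1 + v ^ 2)) v := by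
  have h := (hasDerivAt_arctan v).sin
  rwa [cos_arctan, one_div, one_div, ← div_eq_mul_inv] at h

lemma tendsto_sin_arctan_atTop : Tendsto (fun v ↦ sin (arctan v)) atTop (nhds 1) := by
  have h := (continuous_sin.tendsto (π / 2)).comp
    (tendsto_arctan_atTop.mono_right nhdsWithin_le_nhds)
  rwa [sin_pi_div_two] at h

lemma hasDerivAt_sin_arctan_add_exp (c v : ℝ) :
    HasDerivAt (fun v ↦ sin (arctan v) + 2 * exp (-c * (1 - sin (arctan v)) / 2))
      ((√(1 + v ^ 2))⁻¹ / (1 + v ^ 2) * (1 + c * exp (-c * (1 - sin (arctan v)) / 2))) v := by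
  have hu := hasDerivAt_sin_arctan v
  refine (hu.add ((((hu.const_sub 1).const_mul (-c)).div_const 2).exp.const_mul 2)).congr_deriv ?_
  ring

lemma tendsto_sin_arctan_add_exp (c : ℝ) :
    Tendsto (fun v ↦ sin (arctan v) + 2 * exp (-c * (1 - sin (arctan v)) / 2)) atTop
      (nhds 3) := by
  have hu := tendsto_sin_arctan_atTop
  convert hu.add ((((hu.const_sub 1).const_mul (-c)).div_const 2).rexp.const_mul 2) using 2
  norm_num

lemma one_sub_sin_arctan_le {v : ℝ} (hv : 0 ≤ v) : 1 - sin (arctan v) ≤ (1 + v ^ 2)⁻¹ := by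
  have hcos := cos_sq_arctan v
  have hsin : 0 ≤ sin (arctan v) := by rw [sin_arctan]; positivity
  rw [← one_div, ← hcos]
  nlinarith [sin_sq_add_cos_sq (arctan v), sin_le_one (arctan v)]

lemma one_add_sq_mul_shrinkage_mul_scaleDens_le (ht : 0 < t) (y : ℝ) {v : ℝ} (hv : 0 ≤ v) :
    (1 + y ^ 2) * (shrinkage v * scaleDens t y v) ≤ (√(1 + v ^ 2))⁻¹ / (1 + v ^ 2) *
      (1 + y ^ 2 * exp (-(y ^ 2) * (1 - sin (arctan v)) / 2)) := by
  set E := exp (-(y ^ 2) / (2 * (1 + v ^ 2))) with hE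
  have hE₁ : E ≤ 1 := exp_le_one_iff.2 (div_nonpos_of_nonpos_of_nonneg
    (neg_nonpos.2 (sq_nonneg y)) (by positivity))
  have hEu : E ≤ exp (-(y ^ 2) * (1 - sin (arctan v)) / 2) := by
    rw [hE, exp_le_exp]
    calc -(y ^ 2) / (2 * (1 + v ^ 2)) = -(y ^ 2 * (1 + v ^ 2)⁻¹) / 2 := by field_simp
      _ ≤ -(y ^ 2 * (1 - sin (arctan v))) / 2 := by gcongr; exact one_sub_sin_arctan_le hv
      _ = _ := by ring
  calc (1 + y ^ 2) * (shrinkage v * scaleDens t y v)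
      = (1 + y ^ 2) * (shrinkage v * (t ^ 2 + v ^ 2)⁻¹ * scaleLik y v) := by
        rw [scaleDens, div_eq_inv_mul, mul_assoc]
    _ ≤ (1 + y ^ 2) * ((1 + v ^ 2)⁻¹ * scaleLik y v) := by
        gcongr
        · exact (scaleLik_pos y v).le
        · exact shrinkage_mul_inv_sq_add_sq_le ht v
    _ = (√(1 + v ^ 2))⁻¹ / (1 + v ^ 2) * (E + y ^ 2 * E) := by rw [scaleLik]; ring
    _ ≤ _ := by gcongr

-- With `u = v / √(1 + v²)`, the integrand is at most `exp (-y² (1 - u²) / 2) du`, and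
-- `1 - u² ≥ 1 - u` makes it explicitly integrable.
lemma one_add_sq_mul_scaleIntegral_shrinkage_le (ht : 0 < t) (y : ℝ) :
    (1 + y ^ 2) * scaleIntegral t y shrinkage ≤ 3 := by
  have hderiv (v : ℝ) (_ : v ∈ Ici 0) := hasDerivAt_sin_arctan_add_exp (y ^ 2) v
  have hlim := tendsto_sin_arctan_add_exp (y ^ 2)
  have hnonneg (v : ℝ) (_ : v ∈ Ioi 0) : 0 ≤ (√(1 + v ^ 2))⁻¹ / (1 + v ^ 2) *
      (1 + y ^ 2 * exp (-(y ^ 2) * (1 - sin (arctan v)) / 2)) := by positivity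
  rw [scaleIntegral, ← integral_const_mul]
  calc ∫ v in Ioi (0 : ℝ), (1 + y ^ 2) * (shrinkage v * scaleDens t y v)
      ≤ ∫ v in Ioi (0 : ℝ), (√(1 + v ^ 2))⁻¹ / (1 + v ^ 2) *
          (1 + y ^ 2 * exp (-(y ^ 2) * (1 - sin (arctan v)) / 2)) := by
        refine integral_mono_of_nonneg (.of_forall fun v ↦ ?_)
          (integrableOn_Ioi_deriv_of_nonneg' hderiv hnonneg hlim) ?_
        · have := scaleDens_pos ht y v
          have := shrinkage_nonneg v
          positivity
        · filter_upwards [ae_restrict_mem measurableSet_Ioi] with v hv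
          exact one_add_sq_mul_shrinkage_mul_scaleDens_le ht y (mem_Ioi.1 hv).le
    _ = 3 - (sin (arctan 0) + 2 * exp (-(y ^ 2) * (1 - sin (arctan 0)) / 2)) :=
        integral_Ioi_of_hasDerivAt_of_nonneg' hderiv hnonneg hlim
    _ ≤ 3 := by
        rw [arctan_zero, sin_zero, zero_add]
        exact sub_le_self _ (by positivity)

lemma one_add_sq_mul_scaleMean_shrinkage_le (ht : 0 < t) (ht₁ : t ≤ 1) (y : ℝ) :
    (1 + y ^ 2) * scaleMean t y shrinkage ≤ 45 * t * exp (y ^ 2 / 2) := by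
  have hexp : exp (-(y ^ 2 / 2)) ≤ exp (-(y ^ 2) / (2 * (1 + t ^ 2))) := by
    have := exp_neg_sq_div_le y le_rfl ht.le
    simpa [neg_div] using this
  have hlower : exp (-(y ^ 2 / 2)) / (15 * t) ≤ scaleIntegral t y fun _ ↦ 1 :=
    (div_le_div_of_nonneg_right hexp (by positivity)).trans
      (exp_div_le_scaleIntegral_one ht ht₁ y)
  rw [scaleMean, ← mul_div_assoc]
  calc (1 + y ^ 2) * scaleIntegral t y shrinkage / scaleIntegral t y (fun _ ↦ 1)
      ≤ 3 / (exp (-(y ^ 2 / 2)) / (15 * t)) :=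
        div_le_div₀ (by norm_num) (one_add_sq_mul_scaleIntegral_shrinkage_le ht y)
          (by positivity) hlower
    _ = 45 * t * exp (y ^ 2 / 2) := by
        rw [exp_neg]
        field_simp
        ring

lemma abs_postVar_sub_le (ha : 0 < a) (ha₁ : a ≤ 1 / 2) (hab : a ≤ b) (y : ℝ) :
    |postVar a y - postVar b y| ≤
      3 * (1 + y ^ 2) * ((b - a) * (2 + 62 * scaleMean a y shrinkage / a)) := by
  have hb : 0 < b := ha.trans_le hab
  have hA := abs_scaleMean_sub_le ha ha₁ hab y measurable_shrinkage shrinkage_nonneg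
    fun _ ↦ le_rfl
  have hB := abs_scaleMean_sub_le ha ha₁ hab y (f := fun v ↦ shrinkage v ^ 2) (by fun_prop)
    (fun _ ↦ sq_nonneg _) shrinkage_sq_le
  rw [postVar_eq ha, postVar_eq hb]
  have ha₀ := scaleMean_nonneg ha y shrinkage_nonneg
  have ha₁ := scaleMean_le_one ha y shrinkage_nonneg shrinkage_le_one
  have hb₀ := scaleMean_nonneg hb y shrinkage_nonneg
  have hb₁ := scaleMean_le_one hb y shrinkage_nonneg shrinkage_le_one
  set Q := (b - a) * (2 + 62 * scaleMean a y shrinkage / a)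
  generalize scaleMean a y shrinkage = A at *
  generalize scaleMean b y shrinkage = A' at *
  generalize (scaleMean a y fun v ↦ shrinkage v ^ 2) = B at *
  generalize (scaleMean b y fun v ↦ shrinkage v ^ 2) = B' at *
  have hsum : |A + A'| ≤ 2 := abs_le.2 ⟨by linarith, by linarith⟩
  have hQ : 0 ≤ Q := (abs_nonneg _).trans hA
  calc |A + y ^ 2 * (B - A ^ 2) - (A' + y ^ 2 * (B' - A' ^ 2))|
      = |(A - A') + y ^ 2 * ((B - B') - (A - A') * (A + A'))| := by ring_nf
    _ ≤ |A - A'| + y ^ 2 * (|B - B'| + |A - A'| * |A + A'|) := by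
        refine (abs_add_le _ _).trans (add_le_add_right ?_ _)
        rw [abs_mul, abs_of_nonneg (sq_nonneg y), ← abs_mul (A - A')]
        gcongr
        exact abs_sub _ _
    _ ≤ Q + y ^ 2 * (Q + Q * 2) := by gcongr
    _ ≤ 3 * (1 + y ^ 2) * Q := by linarith

lemma abs_postVar_sub_le_min (ha : 0 < a) (ha₁ : a ≤ 1 / 2) (hab : a ≤ b) (y : ℝ) :
    |postVar a y - postVar b y| ≤
      9000 * (b - a) * min (exp (y ^ 2 / 2)) ((1 + y ^ 2) / a) := by
  have hba : 0 ≤ 3 * (b - a) := by linarith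
  have hinv : 2 ≤ a⁻¹ := (le_inv_comm₀ two_pos ha).2 (by linarith)
  set M := scaleMean a y shrinkage
  have hM₁ : M ≤ 1 := scaleMean_le_one ha y shrinkage_nonneg shrinkage_le_one
  have hMexp := one_add_sq_mul_scaleMean_shrinkage_le ha (by linarith) y
  have bulk : (1 + y ^ 2) * (2 + 62 * M / a) ≤ 3000 * exp (y ^ 2 / 2) :=
    calc (1 + y ^ 2) * (2 + 62 * M / a)
        = 2 * (1 + y ^ 2) + 62 / a * ((1 + y ^ 2) * M) := by ring
      _ ≤ 2 * (2 * exp (y ^ 2 / 2)) + 62 / a * (45 * a * exp (y ^ 2 / 2)) := by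
          gcongr
          linarith [add_one_le_exp (y ^ 2 / 2), sq_nonneg y]
      _ = 2794 * exp (y ^ 2 / 2) := by field_simp; ring
      _ ≤ 3000 * exp (y ^ 2 / 2) := by gcongr; norm_num
  have tail : (1 + y ^ 2) * (2 + 62 * M / a) ≤ 3000 * ((1 + y ^ 2) / a) :=
    calc (1 + y ^ 2) * (2 + 62 * M / a) = (1 + y ^ 2) * (2 + 62 * M * a⁻¹) := by ring
      _ ≤ (1 + y ^ 2) * (a⁻¹ + 62 * 1 * a⁻¹) := by gcongr
      _ = 63 * ((1 + y ^ 2) / a) := by ring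
      _ ≤ 3000 * ((1 + y ^ 2) / a) := by gcongr; norm_num
  calc |postVar a y - postVar b y|
      ≤ 3 * (1 + y ^ 2) * ((b - a) * (2 + 62 * M / a)) := abs_postVar_sub_le ha ha₁ hab y
    _ = 3 * (b - a) * ((1 + y ^ 2) * (2 + 62 * M / a)) := by ring
    _ ≤ 3 * (b - a) * min (3000 * exp (y ^ 2 / 2)) (3000 * ((1 + y ^ 2) / a)) :=
        mul_le_mul_of_nonneg_left (le_min bulk tail) hba
    _ = _ := by rw [← mul_min_of_nonneg _ _ (by norm_num)]; ring

end PosteriorVariance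

section GaussianExpectation

variable {a S : ℝ}

lemma gaussianPDFReal_zero_one_le (y : ℝ) : gaussianPDFReal 0 1 y ≤ exp (-(y ^ 2) / 2) := by
  rw [gaussianPDFReal]
  simp only [NNReal.coe_one, mul_one, sub_zero]
  refine mul_le_of_le_one_left (exp_pos _).le (inv_le_one_of_one_le₀ ?_)
  rw [one_le_sqrt]
  linarith [pi_gt_three]

lemma gaussianPDFReal_zero_abs (s : ℝ≥0) (y : ℝ) :
    gaussianPDFReal 0 s |y| = gaussianPDFReal 0 s y := by
  simp [gaussianPDFReal]

-- The cubic is chosen so that the derivative dominates `(1 + y ^ 2) ^ 2 * exp (-(y ^ 2) / 2)` for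
-- `1 ≤ y`.
lemma hasDerivAt_poly_mul_exp (y : ℝ) :
    HasDerivAt (fun y ↦ -((y ^ 3 + 5 * y + 6) * exp (-(y ^ 2) / 2)))
      ((y ^ 4 + 2 * y ^ 2 + 6 * y - 5) * exp (-(y ^ 2) / 2)) y := by
  have hpoly : HasDerivAt (fun y : ℝ ↦ y ^ 3 + 5 * y + 6) (3 * y ^ 2 + 5) y := by
    simpa using ((hasDerivAt_pow 3 y).add ((hasDerivAt_id y).const_mul 5)).add_const 6
  have hexp : HasDerivAt (fun y : ℝ ↦ exp (-(y ^ 2) / 2)) (exp (-(y ^ 2) / 2) * -y) y := by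
    refine ((hasDerivAt_pow 2 y).neg.div_const 2).exp.congr_deriv ?_
    simp only [Pi.neg_apply]
    ring
  refine (hpoly.mul hexp).neg.congr_deriv ?_
  ring

lemma tendsto_pow_mul_exp_neg_sq_div_two (k : ℕ) :
    Tendsto (fun y : ℝ ↦ y ^ k * exp (-(y ^ 2) / 2)) atTop (nhds 0) := by
  refine squeeze_zero' ?_ ?_ (tendsto_pow_mul_exp_neg_atTop_nhds_zero k)
  · filter_upwards [eventually_ge_atTop 0] with y hy
    positivity
  · filter_upwards [eventually_ge_atTop 2] with y hy
    gcongr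
    nlinarith

lemma tendsto_poly_mul_exp :
    Tendsto (fun y : ℝ ↦ -((y ^ 3 + 5 * y + 6) * exp (-(y ^ 2) / 2))) atTop (nhds 0) := by
  have h := (((tendsto_pow_mul_exp_neg_sq_div_two 3).add
    ((tendsto_pow_mul_exp_neg_sq_div_two 1).const_mul 5)).add
    ((tendsto_pow_mul_exp_neg_sq_div_two 0).const_mul 6)).neg
  simp only [mul_zero, add_zero, neg_zero] at h
  refine h.congr fun y ↦ ?_
  ring

lemma integrable_one_add_sq_sq_gaussianReal (m : ℝ) (s : ℝ≥0) :
    Integrable (fun y : ℝ ↦ (1 + y ^ 2) ^ 2) (gaussianReal m s) := by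
  refine (((integrable_const 1).add ((integrable_pow_gaussianReal m s 2).const_mul 2)).add
    (integrable_pow_gaussianReal m s 4)).congr (.of_forall fun y ↦ ?_)
  simp only [Pi.add_apply]
  ring

lemma integral_Ioi_one_add_sq_sq_mul_gaussianPDFReal_le (hS : 1 ≤ S) :
    ∫ y in Ioi S, (1 + y ^ 2) ^ 2 * gaussianPDFReal 0 1 y ≤ 12 * S ^ 3 * exp (-(S ^ 2) / 2) := by
  have hderiv_nonneg (y : ℝ) (hy : S < y) :
      0 ≤ (y ^ 4 + 2 * y ^ 2 + 6 * y - 5) * exp (-(y ^ 2) / 2) := by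
    refine mul_nonneg ?_ (exp_pos _).le
    nlinarith [sq_nonneg (y ^ 2), sq_nonneg y]
  calc ∫ y in Ioi S, (1 + y ^ 2) ^ 2 * gaussianPDFReal 0 1 y
      ≤ ∫ y in Ioi S, (y ^ 4 + 2 * y ^ 2 + 6 * y - 5) * exp (-(y ^ 2) / 2) := by
        refine integral_mono_of_nonneg
          (.of_forall fun y ↦ mul_nonneg (by positivity) (gaussianPDFReal_nonneg _ _ _))
          (integrableOn_Ioi_deriv_of_nonneg' (fun y _ ↦ hasDerivAt_poly_mul_exp y)
            hderiv_nonneg tendsto_poly_mul_exp) ?_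
        filter_upwards [ae_restrict_mem measurableSet_Ioi] with y hy
        have hy : S < y := hy
        exact mul_le_mul (by nlinarith) (gaussianPDFReal_zero_one_le y)
          (gaussianPDFReal_nonneg _ _ _) (by nlinarith [sq_nonneg (y ^ 2), sq_nonneg y])
    _ = (S ^ 3 + 5 * S + 6) * exp (-(S ^ 2) / 2) := by
        rw [integral_Ioi_of_hasDerivAt_of_nonneg' (fun y _ ↦ hasDerivAt_poly_mul_exp y)
          hderiv_nonneg tendsto_poly_mul_exp]
        ring
    _ ≤ 12 * S ^ 3 * exp (-(S ^ 2) / 2) := by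
        gcongr
        nlinarith [one_le_pow₀ hS (n := 3), mul_self_nonneg (S - 1)]

lemma integral_gaussianReal_of_even {s : ℝ≥0} (hs : s ≠ 0) {f : ℝ → ℝ} (hf : ∀ y, f |y| = f y) :
    ∫ y, f y ∂gaussianReal 0 s = 2 * ∫ y in Ioi (0 : ℝ), f y * gaussianPDFReal 0 s y := by
  rw [← integral_mul_gaussianPDFReal 0 hs, ← integral_comp_abs]
  simp only [hf, gaussianPDFReal_zero_abs]

lemma integrable_min_sq_gaussianReal (ha : 0 < a) (m : ℝ) (s : ℝ≥0) :
    Integrable (fun y ↦ min (exp (y ^ 2 / 2)) ((1 + y ^ 2) / a) ^ 2) (gaussianReal m s) := by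
  refine ((integrable_one_add_sq_sq_gaussianReal m s).const_mul (a ^ 2)⁻¹).mono' (by fun_prop)
    (.of_forall fun y ↦ ?_)
  rw [norm_of_nonneg (by positivity), ← div_eq_inv_mul, ← div_pow]
  gcongr
  exact min_le_right _ _

lemma setIntegral_Ioc_min_sq_mul_gaussianPDFReal_le (ha : 0 < a) (hS : 0 ≤ S) :
    ∫ y in Ioc 0 S, min (exp (y ^ 2 / 2)) ((1 + y ^ 2) / a) ^ 2 * gaussianPDFReal 0 1 y ≤
      S * exp (S ^ 2 / 2) := by
  have pointwise (y : ℝ) (hy : y ∈ Ioc 0 S) :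
      min (exp (y ^ 2 / 2)) ((1 + y ^ 2) / a) ^ 2 * gaussianPDFReal 0 1 y ≤ exp (S ^ 2 / 2) :=
    calc min (exp (y ^ 2 / 2)) ((1 + y ^ 2) / a) ^ 2 * gaussianPDFReal 0 1 y
        ≤ exp (y ^ 2 / 2) ^ 2 * exp (-(y ^ 2) / 2) :=
          mul_le_mul (pow_le_pow_left₀ (by positivity) (min_le_left _ _) 2)
            (gaussianPDFReal_zero_one_le y) (gaussianPDFReal_nonneg _ _ _) (by positivity)
      _ = exp (y ^ 2 / 2) := by rw [← exp_nat_mul, ← exp_add]; congr 1; push_cast; ring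
      _ ≤ exp (S ^ 2 / 2) := by
          have := hy.1.le
          have := hy.2
          gcongr
  have h := setIntegral_mono_on (integrable_mul_gaussianPDFReal one_ne_zero
    (integrable_min_sq_gaussianReal ha 0 1)).integrableOn (by simp) measurableSet_Ioc pointwise
  rwa [setIntegral_const, volume_real_Ioc_of_le hS, sub_zero, smul_eq_mul] at h

lemma setIntegral_Ioi_min_sq_mul_gaussianPDFReal_le (ha : 0 < a) (hS : 1 ≤ S) :
    ∫ y in Ioi S, min (exp (y ^ 2 / 2)) ((1 + y ^ 2) / a) ^ 2 * gaussianPDFReal 0 1 y ≤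
      12 * S ^ 3 * exp (-(S ^ 2) / 2) / a ^ 2 := by
  have hmin := integrable_mul_gaussianPDFReal one_ne_zero (integrable_min_sq_gaussianReal ha 0 1)
  have hpoly := integrable_mul_gaussianPDFReal one_ne_zero
    (integrable_one_add_sq_sq_gaussianReal 0 1)
  calc ∫ y in Ioi S, min (exp (y ^ 2 / 2)) ((1 + y ^ 2) / a) ^ 2 * gaussianPDFReal 0 1 y
      ≤ ∫ y in Ioi S, (1 + y ^ 2) ^ 2 * gaussianPDFReal 0 1 y / a ^ 2 := by
        refine setIntegral_mono hmin.integrableOn (hpoly.div_const _).integrableOn fun y ↦ ?_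
        have := gaussianPDFReal_nonneg 0 1 y
        rw [mul_div_right_comm, ← div_pow]
        gcongr
        exact min_le_right _ _
    _ ≤ 12 * S ^ 3 * exp (-(S ^ 2) / 2) / a ^ 2 := by
        rw [integral_div]
        gcongr
        exact integral_Ioi_one_add_sq_sq_mul_gaussianPDFReal_le hS

lemma integral_min_sq_gaussianReal_le (ha : 0 < a) (hS : 1 ≤ S) :
    ∫ y, min (exp (y ^ 2 / 2)) ((1 + y ^ 2) / a) ^ 2 ∂gaussianReal 0 1 ≤
      2 * (S * exp (S ^ 2 / 2) + 12 * S ^ 3 * exp (-(S ^ 2) / 2) / a ^ 2) := by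
  have hS₀ : 0 ≤ S := by linarith
  have hint := integrable_mul_gaussianPDFReal one_ne_zero (integrable_min_sq_gaussianReal ha 0 1)
  rw [integral_gaussianReal_of_even one_ne_zero fun y ↦ by simp only [sq_abs],
    ← Ioc_union_Ioi_eq_Ioi hS₀, setIntegral_union (Ioc_disjoint_Ioi le_rfl) measurableSet_Ioi
      hint.integrableOn hint.integrableOn]
  exact mul_le_mul_of_nonneg_left (add_le_add
    (setIntegral_Ioc_min_sq_mul_gaussianPDFReal_le ha hS₀)
    (setIntegral_Ioi_min_sq_mul_gaussianPDFReal_le ha hS)) zero_le_two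

lemma one_le_zet (ha : 0 < a) (ha₁ : a ≤ 1 / 2) : 1 ≤ zet a := by
  rw [zet, one_le_sqrt]
  have : log 2 ≤ log (1 / a) := log_le_log two_pos ((le_one_div two_pos ha).2 ha₁)
  linarith [log_two_gt_d9]

lemma exp_zet_sq_div_two (ha : 0 < a) (ha₁ : a ≤ 1) : exp (zet a ^ 2 / 2) = 1 / a := by
  have hlog : 0 ≤ log (1 / a) := log_nonneg (one_le_one_div ha ha₁)
  rw [zet, sq_sqrt (by positivity), mul_div_cancel_left₀ _ two_ne_zero, exp_log (by positivity)]

-- The two error terms balance at the cut-off `S` with `exp (S ^ 2 / 2) = zet a / a`.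
lemma integral_min_sq_gaussianReal_le_zet (ha : 0 < a) (ha₁ : a ≤ 1 / 2) :
    ∫ y, min (exp (y ^ 2 / 2)) ((1 + y ^ 2) / a) ^ 2 ∂gaussianReal 0 1 ≤
      196 * (a⁻¹ * zet a ^ 2) := by
  have hZ := one_le_zet ha ha₁
  have hZexp := exp_zet_sq_div_two ha (by linarith)
  set Z := zet a
  have hlog₀ : 0 ≤ log Z := log_nonneg hZ
  have hlog : log Z ≤ Z - 1 := log_le_sub_one_of_pos (by linarith)
  set S := √(Z ^ 2 + 2 * log Z)
  have hS_sq : S ^ 2 = Z ^ 2 + 2 * log Z := sq_sqrt (by positivity)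
  have hS₁ : 1 ≤ S := one_le_sqrt.2 (by nlinarith)
  have hSZ : S ≤ 2 * Z := sqrt_le_iff.2 ⟨by linarith, by nlinarith⟩
  have hS_exp : exp (S ^ 2 / 2) = Z / a := by
    rw [hS_sq, add_div, exp_add, hZexp, mul_div_cancel_left₀ _ two_ne_zero,
      exp_log (by linarith)]
    ring
  calc ∫ y, min (exp (y ^ 2 / 2)) ((1 + y ^ 2) / a) ^ 2 ∂gaussianReal 0 1
      ≤ 2 * (S * exp (S ^ 2 / 2) + 12 * S ^ 3 * exp (-(S ^ 2) / 2) / a ^ 2) :=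
        integral_min_sq_gaussianReal_le ha hS₁
    _ = 2 * (S * (Z / a) + 12 * S ^ 3 * (a / Z) / a ^ 2) := by
        rw [neg_div, exp_neg, hS_exp, inv_div]
    _ ≤ 2 * (2 * Z * (Z / a) + 12 * (2 * Z) ^ 3 * (a / Z) / a ^ 2) := by gcongr
    _ = 196 * (a⁻¹ * Z ^ 2) := by field_simp; ring

end GaussianExpectation

theorem stmt_18_general :
    ∃ K > 0, ∀ τ₁ τ₂ : ℝ, 0 < τ₁ → τ₁ ≤ 1 / 2 → τ₁ ≤ τ₂ →
      (∫ y, (postVar τ₁ y - postVar τ₂ y) ^ 2 ∂(gaussianReal 0 1)) ≤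
        K * ((τ₂ - τ₁) ^ 2 * τ₁⁻¹ * zet τ₁ ^ 2) := by
  refine ⟨9000 ^ 2 * 196, by norm_num, fun τ₁ τ₂ hτ₁ hτ₁_half hτ ↦ ?_⟩
  calc ∫ y, (postVar τ₁ y - postVar τ₂ y) ^ 2 ∂gaussianReal 0 1
      ≤ ∫ y, (9000 * (τ₂ - τ₁)) ^ 2 *
          min (exp (y ^ 2 / 2)) ((1 + y ^ 2) / τ₁) ^ 2 ∂gaussianReal 0 1 :=
        integral_mono_of_nonneg (.of_forall fun _ ↦ sq_nonneg _)
          ((integrable_min_sq_gaussianReal hτ₁ 0 1).const_mul _) <| .of_forall fun y ↦ by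
            simpa only [sq_abs, mul_pow] using
              pow_le_pow_left₀ (abs_nonneg _) (abs_postVar_sub_le_min hτ₁ hτ₁_half hτ y) 2
    _ ≤ (9000 * (τ₂ - τ₁)) ^ 2 * (196 * (τ₁⁻¹ * zet τ₁ ^ 2)) := by
        rw [integral_const_mul]
        gcongr
        exact integral_min_sq_gaussianReal_le_zet hτ₁ hτ₁_half
    _ = 9000 ^ 2 * 196 * ((τ₂ - τ₁) ^ 2 * τ₁⁻¹ * zet τ₁ ^ 2) := by ring

theorem stmt_18 :
    ∃ K > 0, ∀ n : ℕ, 1 ≤ n → ∀ τ₁ τ₂ : ℝ,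
      1 / (n : ℝ) ≤ τ₁ → τ₁ < τ₂ → τ₂ ≤ 1 / 2 →
        (∫ y, (postVar τ₁ y - postVar τ₂ y) ^ 2 ∂(gaussianReal 0 1)) ≤
          K * ((τ₂ - τ₁) ^ 2 * τ₁⁻¹ * zet τ₁ ^ 2) := by
  obtain ⟨K, hK, bound⟩ := stmt_18_general
  refine ⟨K, hK, fun n hn τ₁ τ₂ hnτ hτ hτ₂ ↦ ?_⟩
  exact bound τ₁ τ₂ ((one_div_pos.2 (by exact_mod_cast hn)).trans_le hnτ)
    (hτ.le.trans hτ₂) hτ.le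

end
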